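/- Let W be a discrete memoryless channel with R_cr < C, and suppose Q ∈ P(𝒳) and R > 0 are such that the pair (Q,W) is nonsingular and R_cr(Q) < R < I(Q;W). Let ρ*_R(Q) := −∂E_r(a,Q)/∂a evaluated at a = R. Then there exists a constant K̃₂ > 0, depending only on W, R and Q, such that for every positive integer N there exists an (N,R) code (f,φ) whose maximal error probability satisfies P_e(f,φ) ≤ K̃₂ · N^{−(1+ρ*_R(Q))/2} · e^{−N·E_r(R,Q)}. -/

import Mathlib

open Real BigOperators
open scoped Classical

namespace RCB

/-- A probability distribution on a finite alphabet. -/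
def IsDist {α : Type*} [Fintype α] (Q : α → ℝ) : Prop :=
  (∀ a, 0 ≤ Q a) ∧ ∑ a, Q a = 1

/-- A discrete memoryless channel, i.e. a stochastic matrix from `X` to `Y`. -/
def IsChannel {X Y : Type*} [Fintype X] [Fintype Y] (W : X → Y → ℝ) : Prop :=
  (∀ x y, 0 ≤ W x y) ∧ ∀ x, ∑ y, W x y = 1

/-- The Gallager function `E_o(ρ, Q)`. -/
noncomputable def Eo {X Y : Type*} [Fintype X] [Fintype Y]
    (W : X → Y → ℝ) (ρ : ℝ) (Q : X → ℝ) : ℝ :=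
  - Real.log (∑ y, (∑ x, Q x * W x y ^ (1 / (1 + ρ))) ^ (1 + ρ))

/-- The random coding exponent `E_r(R, Q)` for input distribution `Q`. -/
noncomputable def ErQ {X Y : Type*} [Fintype X] [Fintype Y]
    (W : X → Y → ℝ) (R : ℝ) (Q : X → ℝ) : ℝ :=
  sSup ((fun ρ => -ρ * R + Eo W ρ Q) '' Set.Icc (0 : ℝ) 1)

/-- The random coding exponent `E_r(R)`. -/
noncomputable def Er {X Y : Type*} [Fintype X] [Fintype Y]
    (W : X → Y → ℝ) (R : ℝ) : ℝ :=
  sSup {v : ℝ | ∃ Q : X → ℝ, IsDist Q ∧ v = ErQ W R Q}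

/-- The mutual information `I(Q; W)` (natural logarithm). -/
noncomputable def MI {X Y : Type*} [Fintype X] [Fintype Y]
    (W : X → Y → ℝ) (Q : X → ℝ) : ℝ :=
  ∑ x, ∑ y, Q x * W x y * Real.log (W x y / ∑ x', Q x' * W x' y)

/-- The capacity `C = max_Q I(Q;W)`. -/
noncomputable def Capacity {X Y : Type*} [Fintype X] [Fintype Y]
    (W : X → Y → ℝ) : ℝ :=
  sSup {v : ℝ | ∃ Q : X → ℝ, IsDist Q ∧ v = MI W Q}

/-- The critical rate of the input distribution `Q`:
`R_cr(Q) = ∂E_o(ρ,Q)/∂ρ |_{ρ=1}`. -/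
noncomputable def RcrQ {X Y : Type*} [Fintype X] [Fintype Y]
    (W : X → Y → ℝ) (Q : X → ℝ) : ℝ :=
  deriv (fun ρ => Eo W ρ Q) 1

/-- The critical rate of the channel: the largest `R` with
`E_r(R) = -R + max_Q E_o(1,Q)`. -/
noncomputable def Rcr {X Y : Type*} [Fintype X] [Fintype Y]
    (W : X → Y → ℝ) : ℝ :=
  sSup {R : ℝ | Er W R = -R + sSup {v : ℝ | ∃ Q : X → ℝ, IsDist Q ∧ v = Eo W 1 Q}}

/-- The rate `R_∞ = inf {R ≥ 0 : E_SP(R) < ∞}` (finiteness of the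
sphere-packing exponent expressed as boundedness of the family of affine maps). -/
noncomputable def Rinf {X Y : Type*} [Fintype X] [Fintype Y]
    (W : X → Y → ℝ) : ℝ :=
  sInf {R : ℝ | 0 ≤ R ∧
    BddAbove {v : ℝ | ∃ (Q : X → ℝ) (ρ : ℝ), IsDist Q ∧ 0 ≤ ρ ∧ v = -ρ * R + Eo W ρ Q}}

/-- The pair `(Q, W)` is singular if `W(y|x) = W(y|z)` whenever
`Q(x)W(y|x)Q(z)W(y|z) > 0`. -/
def Singular {X Y : Type*} (W : X → Y → ℝ) (Q : X → ℝ) : Prop :=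
  ∀ x y z, 0 < Q x * W x y * (Q z * W z y) → W x y = W z y

/-- `ρ^*_R(Q) = -∂E_r(a,Q)/∂a |_{a=R}`. -/
noncomputable def rhoStarQ {X Y : Type*} [Fintype X] [Fintype Y]
    (W : X → Y → ℝ) (Q : X → ℝ) (R : ℝ) : ℝ :=
  - deriv (fun a => ErQ W a Q) R

/-- The number of messages of an `(N, R)` code: `⌈exp (N R)⌉`. -/
noncomputable def nMsgs (N : ℕ) (R : ℝ) : ℕ := ⌈Real.exp (N * R)⌉₊

/-- The `N`-fold memoryless extension of the channel `W`. -/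
noncomputable def Wn {X Y : Type*} (W : X → Y → ℝ) {N : ℕ}
    (c : Fin N → X) (y : Fin N → Y) : ℝ :=
  ∏ n, W (c n) (y n)

/-- The maximal error probability of the code `(f, φ)` over the `N`-fold
memoryless extension of `W`. -/
noncomputable def Pmax {X Y : Type*} [Fintype X] [Fintype Y] {M N : ℕ}
    (W : X → Y → ℝ) (f : Fin M → Fin N → X) (φ : (Fin N → Y) → Fin M) : ℝ :=
  ⨆ m : Fin M, ∑ y : Fin N → Y, Wn W (f m) y * (if φ y ≠ m then (1 : ℝ) else 0)

/-- The ensemble average error probability `P̄_e(Q, N, R)`: the `⌈exp (N R)⌉`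
codewords are drawn i.i.d. from `Q^N` and decoded by maximum-likelihood
decoding, ties counted as errors. -/
noncomputable def Pbar {X Y : Type*} [Fintype X] [Fintype Y]
    (W : X → Y → ℝ) (Q : X → ℝ) (N : ℕ) (R : ℝ) : ℝ :=
  ∑ c : Fin (nMsgs N R) → Fin N → X,
    (∏ m, ∏ n, Q (c m n)) *
      ((nMsgs N R : ℝ)⁻¹ *
        ∑ m, ∑ y : Fin N → Y,
          Wn W (c m) y *
            (if ∃ m', m' ≠ m ∧ Wn W (c m) y ≤ Wn W (c m') y then (1 : ℝ) else 0))

/-- The tilted output distribution `f_ρ`. -/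
noncomputable def fRho {X Y : Type*} [Fintype X] [Fintype Y]
    (W : X → Y → ℝ) (Q : X → ℝ) (ρ : ℝ) (y : Y) : ℝ :=
  (∑ x, Q x * W x y ^ (1 / (1 + ρ))) ^ (1 + ρ) /
    ∑ b, (∑ a, Q a * W a b ^ (1 / (1 + ρ))) ^ (1 + ρ)

/-- The cumulant generating function
`Λ_ρ(λ) = log E_{P_{X,Y}}[exp(λ log (f_ρ(Y)/W(Y|X)))]` with `P_{X,Y} = Q × W`. -/
noncomputable def Lam {X Y : Type*} [Fintype X] [Fintype Y]
    (W : X → Y → ℝ) (Q : X → ℝ) (ρ : ℝ) (t : ℝ) : ℝ :=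
  Real.log (∑ x, ∑ y, Q x * W x y * Real.exp (t * Real.log (fRho W Q ρ y / W x y)))

/-- `P_{X,Y,Z}(S̃_Q)` where `P_{X,Y,Z}(x,y,z) = Q(x)W(y|x)Q(z)` and
`S̃_Q = {(x,y,z) : Q(x)W(y|x)Q(z)W(y|z) > 0}`. -/
noncomputable def PStilde {X Y : Type*} [Fintype X] [Fintype Y]
    (W : X → Y → ℝ) (Q : X → ℝ) : ℝ :=
  ∑ x, ∑ y, ∑ z,
    if 0 < Q x * W x y * (Q z * W z y) then Q x * W x y * Q z else 0

/-- The bivariate cumulant generating function `Λ_{1,ρ}(v)` with respect to the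
conditional distribution `P̃_{X,Y,Z}` of `P_{X,Y,Z}` given `S̃_Q`. -/
noncomputable def Lam1 {X Y : Type*} [Fintype X] [Fintype Y]
    (W : X → Y → ℝ) (Q : X → ℝ) (ρ : ℝ) (v : ℝ × ℝ) : ℝ :=
  Real.log ((∑ x, ∑ y, ∑ z,
    if 0 < Q x * W x y * (Q z * W z y) then
      Q x * W x y * Q z *
        Real.exp (v.1 * Real.log (W x y / fRho W Q ρ y) +
          v.2 * Real.log (W z y / W x y))
    else 0) / PStilde W Q)

/-- The subdifferential of `f : ℝ → ℝ` at `R` (for convex `f`). -/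
def Subderiv (f : ℝ → ℝ) (R : ℝ) : Set ℝ :=
  {g : ℝ | ∀ x, f R + g * (x - R) ≤ f x}

/-- The tilted backward channel `P^ρ_{X|Y}`. -/
noncomputable def PXgY {X Y : Type*} [Fintype X]
    (W : X → Y → ℝ) (Q : X → ℝ) (ρ : ℝ) (x : X) (y : Y) : ℝ :=
  Q x * W x y ^ (1 / (1 + ρ)) / ∑ a, Q a * W a y ^ (1 / (1 + ρ))

/-- The tilted joint distribution `P^ρ_{X,Y}(x,y) = P^ρ_{X|Y}(x|y) P^ρ_Y(y)`. -/
noncomputable def PXY {X Y : Type*} [Fintype X] [Fintype Y]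
    (W : X → Y → ℝ) (Q : X → ℝ) (ρ : ℝ) (x : X) (y : Y) : ℝ :=
  PXgY W Q ρ x y * fRho W Q ρ y

/-!
Draw the codewords independently from `Q ^ N` and write `L x = log (Wn W x y) / (1 + ρ)`. Given the
transmitted word `x` and the output `y`, an error requires another codeword `z` with `L x ≤ L z`;
by the union bound this has probability at most `min 1 (M * ℙ (L x ≤ L z))`, which Gallager's
argument bounds by `(M * ℙ (L x ≤ L z)) ^ ρ` and sums, after tilting `Q` to the weights
`Q x * W x y ^ (1 / (1 + ρ))`, to `exp (-N * (-ρ * R + Eo W ρ Q))` for `M = exp (N * R)`.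

Two exponential factors are lost on the way. Under the tilted weights the event `L x ≤ L z` carries
the factor `exp (-(L z - L x))`, and for `0 < ρ < 1` the bound `min 1 t ≤ t ^ ρ` can be sharpened by
the factor `exp (-min ρ (1 - ρ) * |log t|)`. So both sums are tilted expectations of
`exp (-c * |a + L|)`. If `(Q, W)` is nonsingular, some output letter `y₀` has two inputs of positive
weight and different likelihoods; then `L` is a sum of independent terms, one nonconstant term for
each occurrence of `y₀` in `y`, and these expectations are `O(k ^ (-1/2))` for `k` occurrences. The
first enters with the exponent `ρ`, the second with exponent `1`, and `k` grows linearly in `N` with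
overwhelming probability, which yields the factor `N ^ (-(1 + ρ) / 2)`.

The anticoncentration estimate replaces each nonconstant term, with fixed probability, by a fair
choice between `0` and a jump `d`: after `k` such choices the law is binomial, and its largest atom
is `O(k ^ (-1/2))`. Finally, `RcrQ W Q < R < MI W Q` says that the derivative of
`ρ ↦ -ρ * R + Eo W ρ Q` is positive at `0` and negative at `1`, so the maximum defining `ErQ W R Q`
is attained at some `ρ` in `(0, 1)`, and `-ρ` is a subgradient of `ErQ` at `R`.
-/

section Distributions

variable {ι A : Type*} [Fintype A] {P : A → ℝ}

lemma IsDist.exists_le_of_sum_mul_le (hP : IsDist P) {e : A → ℝ} {ε : ℝ}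
    (h : ∑ a, P a * e a ≤ ε) : ∃ a, e a ≤ ε := by
  by_contra! hlt
  obtain ⟨a₀, -, ha₀⟩ := Finset.exists_ne_zero_of_sum_ne_zero (hP.2.trans_ne one_ne_zero)
  have : ∑ a, P a * ε < ∑ a, P a * e a :=
    Finset.sum_lt_sum (fun a _ => mul_le_mul_of_nonneg_left (hlt a).le (hP.1 a))
      ⟨a₀, Finset.mem_univ _, mul_lt_mul_of_pos_left (hlt a₀) ((hP.1 a₀).lt_of_ne' ha₀)⟩
  rw [← Finset.sum_mul, hP.2, one_mul] at this
  exact this.not_ge h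

variable [Fintype ι] [DecidableEq ι]

lemma IsDist.pi (hP : IsDist P) : IsDist fun c : ι → A => ∏ i, P (c i) :=
  ⟨fun _ => Finset.prod_nonneg fun _ _ => hP.1 _, by
    rw [← Fintype.prod_sum fun (_ : ι) a => P a]
    simp [hP.2]⟩

lemma IsDist.sum_pi_mul_apply (hP : IsDist P) (j : ι) (g : A → ℝ) :
    ∑ c : ι → A, (∏ i, P (c i)) * g (c j) = ∑ a, P a * g a := by
  have hfactor (c : ι → A) :
      (∏ i, P (c i)) * g (c j) = ∏ i, P (c i) * (if i = j then g (c i) else 1) := by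
    rw [Finset.prod_mul_distrib, Fintype.prod_ite_eq']
  simp only [hfactor]
  rw [← Fintype.prod_sum fun i a => P a * (if i = j then g a else 1),
    Fintype.prod_eq_single j fun i hi => by simp [hi, hP.2]]
  simp only [if_true]

lemma IsDist.sum_pi_mul_exists_le (hP : IsDist P) (S : A → Prop) :
    ∑ c : ι → A, (∏ i, P (c i)) * (if ∃ j, S (c j) then 1 else 0) ≤
      min 1 (Fintype.card ι * ∑ a, if S a then P a else 0) := by
  have hprod (c : ι → A) : 0 ≤ ∏ i, P (c i) := hP.pi.1 c
  refine le_min ?_ ?_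
  · calc _ ≤ ∑ c : ι → A, ∏ i, P (c i) :=
          Finset.sum_le_sum fun c _ => mul_le_of_le_one_right (hprod c) (by split_ifs <;> norm_num)
      _ = 1 := hP.pi.2
  · have hunion (c : ι → A) :
        (if ∃ j, S (c j) then (1 : ℝ) else 0) ≤ ∑ j, if S (c j) then (1 : ℝ) else 0 := by
      have hnn : ∀ j ∈ Finset.univ, (0 : ℝ) ≤ if S (c j) then 1 else 0 := fun j _ => by
        split_ifs <;> norm_num
      split_ifs with h
      · obtain ⟨j, hj⟩ := h
        simpa only [if_pos hj] using Finset.single_le_sum hnn (Finset.mem_univ j)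
      · exact Finset.sum_nonneg hnn
    calc _ ≤ ∑ c : ι → A, ∑ j, (∏ i, P (c i)) * (if S (c j) then 1 else 0) :=
          Finset.sum_le_sum fun c _ => by
            rw [← Finset.mul_sum]
            exact mul_le_mul_of_nonneg_left (hunion c) (hprod c)
      _ = ∑ _j : ι, ∑ a, if S a then P a else 0 := by
          rw [Finset.sum_comm]
          refine Finset.sum_congr rfl fun j _ => ?_
          simpa only [mul_ite, mul_one, mul_zero] using
            hP.sum_pi_mul_apply j fun a => if S a then 1 else 0
      _ = _ := by simp

end Distributions

section Codes

variable {ι κ A B : Type*}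

section Decoding

variable [Fintype B] {V : A → B → ℝ}

/-- The error probability of message `m` under maximum-likelihood decoding of the codebook `c` over
the channel `V`, ties counted as errors. -/
noncomputable def mlError (V : A → B → ℝ) (c : ι → A) (m : ι) : ℝ :=
  ∑ b, V (c m) b * (if ∃ m', m' ≠ m ∧ V (c m) b ≤ V (c m') b then 1 else 0)

lemma mlError_nonneg (hV : ∀ a b, 0 ≤ V a b) (c : ι → A) (m : ι) : 0 ≤ mlError V c m :=
  Finset.sum_nonneg fun _ _ => mul_nonneg (hV _ _) (by split_ifs <;> norm_num)

lemma mlError_comp_le (hV : ∀ a b, 0 ≤ V a b) (c : ι → A) {g : κ → ι}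
    (hg : Function.Injective g) (k : κ) : mlError V (c ∘ g) k ≤ mlError V c (g k) := by
  refine Finset.sum_le_sum fun b _ => mul_le_mul_of_nonneg_left ?_ (hV _ _)
  by_cases h : ∃ m', m' ≠ k ∧ V ((c ∘ g) k) b ≤ V ((c ∘ g) m') b
  · obtain ⟨m', hne, hle⟩ := h
    rw [if_pos ⟨m', hne, hle⟩, if_pos ⟨g m', hg.ne hne, hle⟩]
  · rw [if_neg h]
    split_ifs <;> norm_num

lemma exists_decoder_error_le_mlError [Nonempty ι] [DecidableEq ι] (hV : ∀ a b, 0 ≤ V a b)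
    (c : ι → A) : ∃ φ : B → ι, ∀ m,
      ∑ b, V (c m) b * (if φ b ≠ m then 1 else 0) ≤ mlError V c m := by
  let Wins (b : B) (m : ι) : Prop := ∀ m', m' ≠ m → V (c m') b < V (c m) b
  refine ⟨fun b => Classical.epsilon (Wins b), fun m => Finset.sum_le_sum fun b _ =>
    mul_le_mul_of_nonneg_left ?_ (hV _ _)⟩
  by_cases hwins : Wins b m
  · have hdecoded : Classical.epsilon (Wins b) = m := by
      by_contra hne
      exact lt_asymm (Classical.epsilon_spec ⟨m, hwins⟩ m (Ne.symm hne)) (hwins _ hne)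
    rw [if_neg (not_not.2 hdecoded)]
    split_ifs <;> norm_num
  · simp only [Wins, not_forall, not_lt, exists_prop] at hwins
    rw [if_pos hwins]
    split_ifs <;> norm_num

end Decoding

lemma card_le_two_mul_card_le_two_mul [Fintype ι] {e : ι → ℝ} (he : ∀ m, 0 ≤ e m) {ε : ℝ}
    (hε : 0 < ε) (h : ∑ m, e m ≤ Fintype.card ι * ε) :
    Fintype.card ι ≤ 2 * (Finset.univ.filter fun m => e m ≤ 2 * ε).card := by
  have hsplit := Finset.card_filter_add_card_filter_not (s := Finset.univ) fun m => e m ≤ 2 * ε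
  set good := Finset.univ.filter fun m => e m ≤ 2 * ε
  set bad := Finset.univ.filter fun m => ¬ e m ≤ 2 * ε
  rw [Finset.card_univ] at hsplit
  suffices 2 * bad.card ≤ Fintype.card ι by lia
  have hbad : (bad.card : ℝ) * (2 * ε) ≤ ∑ m ∈ bad, e m := by
    rw [← nsmul_eq_mul]
    exact Finset.card_nsmul_le_sum _ _ _ fun m hm => (not_le.1 (Finset.mem_filter.1 hm).2).le
  have hle : (2 * bad.card : ℝ) * ε ≤ Fintype.card ι * ε := by
    linarith [Finset.sum_le_univ_sum_of_nonneg (s := bad) he]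
  exact_mod_cast le_of_mul_le_mul_right hle hε

variable [Fintype A]

/-- The probability, under the weights `P`, that a codeword has likelihood at least `t`; here `w a`
is the likelihood of the codeword `a` for a fixed channel output. -/
noncomputable def upperTail (P w : A → ℝ) (t : ℝ) : ℝ :=
  ∑ a, if t ≤ w a then P a else 0

/-- The contribution of one channel output, with likelihoods `w`, to the random coding union bound
for `M` codewords drawn from `P`: the union bound on the probability that some codeword is at least
as likely as the transmitted one, truncated at `1` and averaged over the transmitted codeword. -/
noncomputable def rcu (P w : A → ℝ) (M : ℝ) : ℝ :=
  ∑ a, P a * w a * min 1 (M * upperTail P w (w a))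

lemma upperTail_nonneg {P : A → ℝ} (hP : ∀ a, 0 ≤ P a) (w : A → ℝ) (t : ℝ) :
    0 ≤ upperTail P w t :=
  Finset.sum_nonneg fun a _ => by split_ifs; exacts [hP a, le_rfl]

variable {P : A → ℝ}

lemma sum_pi_mul_exists_ne_le [Fintype ι] [DecidableEq ι] (hP : IsDist P) {w : A → ℝ}
    (hw : ∀ a, 0 ≤ w a) (m : ι) :
    ∑ c : ι → A, (∏ i, P (c i)) *
        (w (c m) * if ∃ m', m' ≠ m ∧ w (c m) ≤ w (c m') then 1 else 0) ≤
      rcu P w (Fintype.card ι) := by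
  let Ψ (q : A × ({j // j ≠ m} → A)) : ℝ := P q.1 * w q.1 *
    ((∏ j, P (q.2 j)) * if ∃ j, w q.1 ≤ w (q.2 j) then 1 else 0)
  have hsplit (c : ι → A) :
      (∏ i, P (c i)) * (w (c m) * if ∃ m', m' ≠ m ∧ w (c m) ≤ w (c m') then 1 else 0) =
        Ψ (Equiv.funSplitAt m A c) := by
    simp only [Ψ, Equiv.funSplitAt_apply, Subtype.exists, exists_prop]
    rw [Fintype.prod_eq_mul_prod_subtype_ne (fun i => P (c i)) m, mul_mul_mul_comm]
  rw [Finset.sum_congr rfl fun c _ => hsplit c, (Equiv.funSplitAt m A).sum_comp Ψ,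
    Fintype.sum_prod_type]
  refine Finset.sum_le_sum fun a _ => ?_
  have hcard : (Fintype.card {j // j ≠ m} : ℝ) ≤ Fintype.card ι := by
    exact_mod_cast Fintype.card_subtype_le _
  have hunion := hP.sum_pi_mul_exists_le (ι := {j // j ≠ m}) fun a' => w a ≤ w a'
  simp only [Ψ, ← Finset.mul_sum]
  refine mul_le_mul_of_nonneg_left ?_ (mul_nonneg (hP.1 a) (hw a))
  calc _ ≤ min 1 ((Fintype.card {j // j ≠ m} : ℝ) * upperTail P w (w a)) := by
        convert hunion using 4
        unfold upperTail
        congr!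
    _ ≤ _ := min_le_min_left _ (mul_le_mul_of_nonneg_right hcard (upperTail_nonneg hP.1 w _))

variable [Fintype B] {V : A → B → ℝ}

lemma sum_pi_mul_mlError_le [Fintype ι] [DecidableEq ι] (hP : IsDist P) (hV : ∀ a b, 0 ≤ V a b)
    (m : ι) :
    ∑ c : ι → A, (∏ i, P (c i)) * mlError V c m ≤ ∑ b, rcu P (V · b) (Fintype.card ι) := by
  simp only [mlError, Finset.mul_sum]
  rw [Finset.sum_comm]
  refine Finset.sum_le_sum fun b _ => ?_
  refine le_of_eq_of_le ?_ (sum_pi_mul_exists_ne_le hP (hV · b) m)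
  congr!

lemma exists_sum_mlError_le (ι : Type*) [Fintype ι] (hP : IsDist P) (hV : ∀ a b, 0 ≤ V a b) :
    ∃ c : ι → A, ∑ m, mlError V c m ≤ Fintype.card ι * ∑ b, rcu P (V · b) (Fintype.card ι) := by
  refine hP.pi.exists_le_of_sum_mul_le ?_
  calc ∑ c : ι → A, (∏ i, P (c i)) * ∑ m, mlError V c m
      = ∑ m, ∑ c : ι → A, (∏ i, P (c i)) * mlError V c m := by
        simp only [Finset.mul_sum]
        exact Finset.sum_comm
    _ ≤ ∑ _m : ι, ∑ b, rcu P (V · b) (Fintype.card ι) :=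
        Finset.sum_le_sum fun m _ => sum_pi_mul_mlError_le hP hV m
    _ = _ := by simp

/-- Expurgation: of `2 * M` random codewords, at least `M` have at most twice the mean error. -/
lemma exists_code_of_sum_rcu_le (hP : IsDist P) (hV : ∀ a b, 0 ≤ V a b) {M : ℕ} (hM : 0 < M)
    {ε : ℝ} (hε : 0 < ε) (h : ∑ b, rcu P (V · b) (2 * M) ≤ ε) :
    ∃ (f : Fin M → A) (φ : B → Fin M),
      ∀ m, ∑ b, V (f m) b * (if φ b ≠ m then 1 else 0) ≤ 2 * ε := by
  obtain ⟨c, hc⟩ := exists_sum_mlError_le (Fin (2 * M)) hP hV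
  have hmarkov := card_le_two_mul_card_le_two_mul (mlError_nonneg hV c) hε <|
    hc.trans (mul_le_mul_of_nonneg_left (by simpa using h) (Nat.cast_nonneg _))
  rw [Fintype.card_fin] at hmarkov
  obtain ⟨T, hTgood, hTcard⟩ := Finset.exists_subset_card_eq (le_of_mul_le_mul_left hmarkov two_pos)
  have : Nonempty (Fin M) := ⟨⟨0, hM⟩⟩
  let g : Fin M ↪o Fin (2 * M) := T.orderEmbOfFin hTcard
  obtain ⟨φ, hφ⟩ := exists_decoder_error_le_mlError hV (c ∘ g)
  exact ⟨c ∘ g, φ, fun m => (hφ m).trans <| (mlError_comp_le hV c g.injective m).trans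
    (Finset.mem_filter.1 (hTgood (T.orderEmbOfFin_mem hTcard m))).2⟩

end Codes

section Anticoncentration

lemma mul_rpow_neg_add_mul_rpow_neg_le {q u θ : ℝ} (hq₀ : 0 ≤ q) (hq₁ : q ≤ 1) (hu : 1 ≤ u)
    (hθ₀ : 0 ≤ θ) (hθ₁ : θ ≤ 1) :
    q * (u + 1) ^ (-θ) + (1 - q) * u ^ (-θ) ≤ (u + q / 2) ^ (-θ) := by
  have hu₀ : 0 < u := by linarith
  have hq : 0 ≤ 1 - q := sub_nonneg.2 hq₁
  have hconcave := (Real.concaveOn_rpow hθ₀ hθ₁).2 (x := (u + 1)⁻¹) (y := u⁻¹)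
    (Set.mem_Ici.2 (by positivity)) (Set.mem_Ici.2 (by positivity)) hq₀ hq (by ring)
  simp only [smul_eq_mul] at hconcave
  have hmean : q * (u + 1)⁻¹ + (1 - q) * u⁻¹ ≤ (u + q / 2)⁻¹ := by
    have : q * (u + 1)⁻¹ + (1 - q) * u⁻¹ = (u + 1 - q) / (u * (u + 1)) := by
      field_simp
      ring
    rw [this, inv_eq_one_div, div_le_div_iff₀ (by positivity) (by positivity)]
    nlinarith [mul_nonneg hq₀ (sub_nonneg.2 hu), mul_nonneg hq₀ hq₀]
  rw [Real.rpow_neg (by positivity), Real.rpow_neg hu₀.le, Real.rpow_neg (by positivity),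
    ← Real.inv_rpow (by positivity), ← Real.inv_rpow hu₀.le, ← Real.inv_rpow (by positivity)]
  exact hconcave.trans (Real.rpow_le_rpow (by positivity) hmean hθ₀)

section SumIntegral

variable {X : Type*} [Fintype X]

/-- The integral of `F (a + ∑ n, v n (c n))` over `c : Fin N → X` against the product of the
weights `p n`, which need not be normalised. -/
noncomputable def sumIntegral {N : ℕ} (p v : Fin N → X → ℝ) (F : ℝ → ℝ) (a : ℝ) : ℝ :=
  ∑ c : Fin N → X, (∏ n, p n (c n)) * F (a + ∑ n, v n (c n))

/-- The average of the translates of `F` by `0` and `d`. -/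
noncomputable def twoPointAverage (d : ℝ) (F : ℝ → ℝ) (a : ℝ) : ℝ :=
  (F a + F (a + d)) / 2

/-- Two points whose `v`-values differ by `d` each carry at least the fraction `q / 2` of the total
mass of `p`. -/
def ChargesPair (p v : X → ℝ) (d q : ℝ) : Prop :=
  ∃ x₁ x₂, x₁ ≠ x₂ ∧ v x₂ = v x₁ + d ∧ q / 2 * ∑ x, p x ≤ p x₁ ∧ q / 2 * ∑ x, p x ≤ p x₂

lemma sumIntegral_zero (p v : Fin 0 → X → ℝ) (F : ℝ → ℝ) (a : ℝ) : sumIntegral p v F a = F a := by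
  simp [sumIntegral]

lemma sumIntegral_succ {N : ℕ} (p v : Fin (N + 1) → X → ℝ) (F : ℝ → ℝ) (a : ℝ) :
    sumIntegral p v F a =
      ∑ x, p 0 x * sumIntegral (Fin.tail p) (Fin.tail v) F (a + v 0 x) := by
  unfold sumIntegral
  rw [← (Fin.consEquiv fun _ => X).sum_comp, Fintype.sum_prod_type]
  simp [Fin.consEquiv, Fin.prod_univ_succ, Fin.sum_univ_succ, Fin.tail, Finset.mul_sum, mul_assoc,
    add_assoc]

lemma twoPointAverage_sumIntegral {N : ℕ} (p v : Fin N → X → ℝ) (F : ℝ → ℝ) (d a : ℝ) :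
    twoPointAverage d (sumIntegral p v F) a = sumIntegral p v (twoPointAverage d F) a := by
  simp only [twoPointAverage, sumIntegral]
  rw [← Finset.sum_add_distrib, Finset.sum_div]
  refine Finset.sum_congr rfl fun c _ => ?_
  rw [add_right_comm a d]
  ring

lemma exists_chargesPair {p v : X → ℝ} (hp : ∀ x, 0 ≤ p x) {x₁ x₂ : X} (h₁ : 0 < p x₁)
    (h₂ : 0 < p x₂) (hv : v x₁ < v x₂) :
    ∃ q, 0 < q ∧ q ≤ 1 ∧ ChargesPair p v (v x₂ - v x₁) q := by
  have hne : x₁ ≠ x₂ := by rintro rfl; exact lt_irrefl _ hv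
  have hpair : p x₁ + p x₂ ≤ ∑ x, p x :=
    Finset.add_le_sum (fun x _ => hp x) (Finset.mem_univ _) (Finset.mem_univ _) hne
  have hmass : 0 < ∑ x, p x := by linarith
  have hle₁ := min_le_left (p x₁) (p x₂)
  have hle₂ := min_le_right (p x₁) (p x₂)
  have hcancel : 2 * min (p x₁) (p x₂) / (∑ x, p x) / 2 * ∑ x, p x = min (p x₁) (p x₂) := by
    field_simp
  refine ⟨2 * min (p x₁) (p x₂) / ∑ x, p x,
    div_pos (mul_pos two_pos (lt_min h₁ h₂)) hmass, ?_, x₁, x₂, hne,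
    (add_sub_cancel _ _).symm, hcancel.trans_le hle₁, hcancel.trans_le hle₂⟩
  rw [div_le_one hmass]
  linarith

lemma ChargesPair.sum_mul_le {p v : X → ℝ} {d q : ℝ} (h : ChargesPair p v d q)
    (hp : ∀ x, 0 ≤ p x) (hq : 0 ≤ q) {J : ℝ → ℝ} {u w : ℝ} (hu : ∀ t, J t ≤ u)
    (hw : ∀ t, twoPointAverage d J t ≤ w) (a : ℝ) :
    ∑ x, p x * J (a + v x) ≤ (∑ x, p x) * (q * w + (1 - q) * u) := by
  obtain ⟨x₁, x₂, hne, hv, h₁, h₂⟩ := h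
  have hmass : 0 ≤ ∑ x, p x := Finset.sum_nonneg fun x _ => hp x
  have hdefect (x : X) : 0 ≤ u - J (a + v x) := sub_nonneg.2 (hu _)
  have haverage : J (a + v x₁) + J (a + v x₂) ≤ 2 * w := by
    have := hw (a + v x₁)
    rw [twoPointAverage, add_assoc, ← hv] at this
    linarith
  have hpair : (∑ x, p x) * (q * (u - w)) ≤ ∑ x, p x * (u - J (a + v x)) :=
    calc (∑ x, p x) * (q * (u - w))
        ≤ (∑ x, p x) * (q / 2 * ((u - J (a + v x₁)) + (u - J (a + v x₂)))) := by
          refine mul_le_mul_of_nonneg_left ?_ hmass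
          nlinarith
      _ = q / 2 * (∑ x, p x) * (u - J (a + v x₁)) + q / 2 * (∑ x, p x) * (u - J (a + v x₂)) := by
          ring
      _ ≤ p x₁ * (u - J (a + v x₁)) + p x₂ * (u - J (a + v x₂)) :=
          add_le_add (mul_le_mul_of_nonneg_right h₁ (hdefect _))
            (mul_le_mul_of_nonneg_right h₂ (hdefect _))
      _ ≤ ∑ x, p x * (u - J (a + v x)) :=
          Finset.add_le_sum (fun x _ => mul_nonneg (hp x) (hdefect x)) (Finset.mem_univ _)
            (Finset.mem_univ _) hne
  simp only [mul_sub, Finset.sum_sub_distrib, ← Finset.sum_mul] at hpair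
  linarith

lemma ChargesPair.sum_mul_le_rpow {p v : X → ℝ} {d q θ : ℝ} (h : ChargesPair p v d q)
    (hp : ∀ x, 0 ≤ p x) (hq₀ : 0 ≤ q) (hq₁ : q ≤ 1) (hθ₀ : 0 ≤ θ) (hθ₁ : θ ≤ 1) {J : ℝ → ℝ}
    {D u : ℝ} (hD : 0 ≤ D) (hu : 1 ≤ u) (hJ : ∀ t, J t ≤ D * u ^ (-θ))
    (hJd : ∀ t, twoPointAverage d J t ≤ D * (u + 1) ^ (-θ)) (a : ℝ) :
    ∑ x, p x * J (a + v x) ≤ (∑ x, p x) * (D * (u + q / 2) ^ (-θ)) := by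
  refine (h.sum_mul_le hp hq₀ hJ hJd a).trans ?_
  have hmass : 0 ≤ ∑ x, p x := Finset.sum_nonneg fun x _ => hp x
  calc _ = (∑ x, p x) * (D * (q * (u + 1) ^ (-θ) + (1 - q) * u ^ (-θ))) := by ring
    _ ≤ _ := by
      gcongr
      exact mul_rpow_neg_add_mul_rpow_neg_le hq₀ hq₁ hu hθ₀ hθ₁

/-- Each coordinate charging a pair at distance `d` trades a fraction `q` of the mass for one more
two-point average, which by hypothesis improves the bound. -/
lemma sumIntegral_iterate_twoPointAverage_le {F : ℝ → ℝ} {d q B θ : ℝ} (hq₀ : 0 ≤ q) (hq₁ : q ≤ 1)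
    (hθ₀ : 0 ≤ θ) (hθ₁ : θ ≤ 1) (hB : 0 ≤ B)
    (hF : ∀ (k : ℕ) a, (twoPointAverage d)^[k] F a ≤ B * ((k : ℝ) + 1) ^ (-θ)) {N : ℕ}
    (p v : Fin N → X → ℝ) (hp : ∀ n x, 0 ≤ p n x) (k : ℕ) (a : ℝ) :
    sumIntegral p v ((twoPointAverage d)^[k] F) a ≤ (∏ n, ∑ x, p n x) * (B *
      (k + 1 + q / 2 * (Finset.univ.filter fun n => ChargesPair (p n) (v n) d q).card) ^ (-θ)) := by
  induction N generalizing k a with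
  | zero => simpa [sumIntegral_zero] using hF k a
  | succ N ih =>
    let p' := Fin.tail p
    let v' := Fin.tail v
    let L := (Finset.univ.filter fun n => ChargesPair (p' n) (v' n) d q).card
    have hcard : (Finset.univ.filter fun n => ChargesPair (p n) (v n) d q).card =
        (if ChargesPair (p 0) (v 0) d q then 1 else 0) + L := Fin.card_filter_univ_succ' _
    have htail (k : ℕ) (t : ℝ) : sumIntegral p' v' ((twoPointAverage d)^[k] F) t ≤
        (∏ n, ∑ x, p' n x) * B * (k + 1 + q / 2 * L) ^ (-θ) :=
      (ih p' v' (fun n => hp n.succ) k t).trans_eq (mul_assoc _ _ _).symm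
    rw [sumIntegral_succ, Fin.prod_univ_succ, hcard, mul_assoc, ← mul_assoc (∏ n, _) B]
    by_cases hpair : ChargesPair (p 0) (v 0) d q
    · have hnext (t : ℝ) :
          twoPointAverage d (sumIntegral p' v' ((twoPointAverage d)^[k] F)) t ≤
            (∏ n, ∑ x, p' n x) * B * (k + 1 + q / 2 * L + 1) ^ (-θ) := by
        rw [twoPointAverage_sumIntegral, ← Function.iterate_succ_apply' (twoPointAverage d)]
        convert htail (k + 1) t using 3
        push_cast
        ring
      have hu : (1 : ℝ) ≤ k + 1 + q / 2 * L := by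
        have : (0 : ℝ) ≤ k + q / 2 * L := by positivity
        linarith
      have hD : 0 ≤ (∏ n, ∑ x, p' n x) * B :=
        mul_nonneg (Finset.prod_nonneg fun n _ => Finset.sum_nonneg fun x _ => hp _ _) hB
      have hshift : (k : ℝ) + 1 + q / 2 * (1 + L : ℕ) = k + 1 + q / 2 * L + q / 2 := by
        push_cast
        ring
      rw [if_pos hpair, hshift]
      exact hpair.sum_mul_le_rpow (hp 0) hq₀ hq₁ hθ₀ hθ₁ hD hu (htail k) hnext a
    · rw [if_neg hpair, zero_add, Finset.sum_mul]
      exact Finset.sum_le_sum fun x _ => mul_le_mul_of_nonneg_left (htail k _) (hp 0 x)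

end SumIntegral

section TwoPointIterates

lemma iterate_twoPointAverage_apply (d : ℝ) (F : ℝ → ℝ) (k : ℕ) (a : ℝ) :
    (twoPointAverage d)^[k] F a =
      ∑ j ∈ Finset.range (k + 1), (k.choose j : ℝ) * (F (a + j * d) / 2 ^ k) := by
  induction k generalizing a with
  | zero => simp
  | succ k ih =>
    rw [Function.iterate_succ_apply', twoPointAverage, ih, ih,
      Finset.sum_choose_succ_mul (R := ℝ) fun i _ => F (a + i * d) / 2 ^ (k + 1),
      ← Finset.sum_add_distrib, ← Finset.sum_add_distrib, Finset.sum_div]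
    refine Finset.sum_congr rfl fun j _ => ?_
    rw [show a + ((j + 1 : ℕ) : ℝ) * d = a + d + j * d by push_cast; ring, pow_succ]
    ring

lemma two_mul_add_one_mul_centralBinom_sq_le (n : ℕ) :
    (2 * n + 1) * n.centralBinom ^ 2 ≤ 16 ^ n := by
  induction n with
  | zero => simp
  | succ n ih =>
    have hrec : (n + 1) ^ 2 * (n + 1).centralBinom ^ 2 =
        4 * (2 * n + 1) ^ 2 * n.centralBinom ^ 2 := by
      rw [← mul_pow, Nat.succ_mul_centralBinom_succ n]
      ring
    refine le_of_mul_le_mul_left (a := (n + 1) ^ 2) ?_ (by positivity)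
    calc (n + 1) ^ 2 * ((2 * (n + 1) + 1) * (n + 1).centralBinom ^ 2)
        = (4 * (2 * n + 3) * (2 * n + 1)) * ((2 * n + 1) * n.centralBinom ^ 2) := by
          linear_combination (2 * n + 3) * hrec
      _ ≤ (16 * (n + 1) ^ 2) * 16 ^ n := Nat.mul_le_mul (by nlinarith) ih
      _ = _ := by ring

lemma succ_mul_choose_sq_le (k j : ℕ) : (k + 1) * k.choose j ^ 2 ≤ 4 ^ k := by
  suffices (k + 1) * k.choose (k / 2) ^ 2 ≤ 4 ^ k from
    (Nat.mul_le_mul_left _ (Nat.pow_le_pow_left (Nat.choose_le_middle j k) 2)).trans this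
  rcases Nat.even_or_odd' k with ⟨m, rfl | rfl⟩
  · rw [Nat.mul_div_cancel_left _ two_pos, ← Nat.centralBinom_eq_two_mul_choose, pow_mul]
    exact two_mul_add_one_mul_centralBinom_sq_le m
  · have hcentral : (m + 1).centralBinom = 2 * (2 * m + 1).choose m := by
      rw [Nat.centralBinom_eq_two_mul_choose, show 2 * (m + 1) = 2 * m + 1 + 1 by ring,
        Nat.choose_succ_succ, Nat.choose_symm_half]
      ring
    have hbound := two_mul_add_one_mul_centralBinom_sq_le (m + 1)
    rw [hcentral] at hbound
    rw [show (2 * m + 1) / 2 = m by lia, pow_succ 4, pow_mul]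
    norm_num [pow_succ] at hbound ⊢
    nlinarith

lemma choose_div_two_pow_le (k j : ℕ) :
    (k.choose j : ℝ) / 2 ^ k ≤ ((k : ℝ) + 1) ^ (-(1 / 2) : ℝ) := by
  have hsq : ((k : ℝ) + 1) * (k.choose j : ℝ) ^ 2 ≤ 4 ^ k := by
    exact_mod_cast succ_mul_choose_sq_le k j
  rw [Real.rpow_neg (by positivity), ← Real.sqrt_eq_rpow, ← Real.sqrt_inv]
  refine Real.le_sqrt_of_sq_le ?_
  rw [div_pow, ← pow_mul, mul_comm k 2, pow_mul, inv_eq_one_div,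
    div_le_div_iff₀ (by positivity) (by positivity)]
  norm_num
  linarith

lemma iterate_twoPointAverage_le {d B : ℝ} {F : ℝ → ℝ} (hF : ∀ t, 0 ≤ F t)
    (hB : ∀ (m : ℕ) a, ∑ j ∈ Finset.range m, F (a + j * d) ≤ B) (k : ℕ) (a : ℝ) :
    (twoPointAverage d)^[k] F a ≤ B * ((k : ℝ) + 1) ^ (-(1 / 2) : ℝ) := by
  rw [iterate_twoPointAverage_apply]
  calc _ ≤ ∑ j ∈ Finset.range (k + 1), F (a + j * d) * ((k : ℝ) + 1) ^ (-(1 / 2) : ℝ) := by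
        refine Finset.sum_le_sum fun j _ => ?_
        rw [mul_div_left_comm]
        exact mul_le_mul_of_nonneg_left (choose_div_two_pow_le k j) (hF _)
    _ ≤ _ := by
        rw [← Finset.sum_mul]
        exact mul_le_mul_of_nonneg_right (hB _ _) (by positivity)

end TwoPointIterates

section LaplaceKernel

lemma exp_neg_abs_mul_one_add_exp_neg_sq_le (t : ℝ) :
    Real.exp (-|t|) * (1 + Real.exp (-t)) ^ 2 ≤ 4 * Real.exp (-t) := by
  have hpos := Real.exp_pos (-t)
  rcases le_total 0 t with ht | ht
  · have : Real.exp (-t) ≤ 1 := Real.exp_le_one_iff.2 (neg_nonpos.2 ht)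
    rw [abs_of_nonneg ht, mul_comm 4]
    refine mul_le_mul_of_nonneg_left ?_ hpos.le
    nlinarith
  · have : 1 ≤ Real.exp (-t) := Real.one_le_exp (neg_nonneg.2 ht)
    rw [abs_of_nonpos ht, Real.exp_neg (-t), inv_mul_le_iff₀ hpos]
    nlinarith

lemma exp_neg_abs_le_sigmoid_sub {d : ℝ} (hd : 0 < d) (t : ℝ) :
    Real.exp (-|t|) ≤
      4 / (1 - Real.exp (-d)) * (Real.sigmoid (t + d) - Real.sigmoid t) := by
  have hE := Real.exp_pos (-t)
  have hD := Real.exp_pos (-d)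
  have hD₁ : 0 < 1 - Real.exp (-d) := sub_pos.2 (Real.exp_lt_one_iff.2 (neg_lt_zero.2 hd))
  have hkernel := exp_neg_abs_mul_one_add_exp_neg_sq_le t
  rw [Real.sigmoid, Real.sigmoid, neg_add, Real.exp_add]
  set E := Real.exp (-t)
  set D := Real.exp (-d)
  have hdiff : 4 / (1 - D) * ((1 + E * D)⁻¹ - (1 + E)⁻¹) = 4 * E / ((1 + E * D) * (1 + E)) := by
    field_simp
    ring
  rw [hdiff, le_div_iff₀ (by positivity)]
  refine le_trans (mul_le_mul_of_nonneg_left ?_ (Real.exp_pos _).le) hkernel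
  nlinarith [mul_pos hE hD₁, mul_pos hE hE]

lemma sum_exp_neg_abs_add_mul_le {d : ℝ} (hd : 0 < d) (m : ℕ) (a : ℝ) :
    ∑ j ∈ Finset.range m, Real.exp (-|a + j * d|) ≤ 4 / (1 - Real.exp (-d)) := by
  have hD : 0 < 1 - Real.exp (-d) := sub_pos.2 (Real.exp_lt_one_iff.2 (neg_lt_zero.2 hd))
  calc _ ≤ ∑ j ∈ Finset.range m, 4 / (1 - Real.exp (-d)) *
        (Real.sigmoid (a + (j + 1 : ℕ) * d) - Real.sigmoid (a + j * d)) :=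
        Finset.sum_le_sum fun j _ => by
          rw [Nat.cast_succ, add_one_mul, ← add_assoc]
          exact exp_neg_abs_le_sigmoid_sub hd (a + j * d)
    _ = 4 / (1 - Real.exp (-d)) * (Real.sigmoid (a + m * d) - Real.sigmoid (a + (0 : ℕ) * d)) := by
        rw [← Finset.mul_sum, Finset.sum_range_sub fun j : ℕ => Real.sigmoid (a + j * d)]
    _ ≤ 4 / (1 - Real.exp (-d)) * 1 := by
        gcongr
        linarith [Real.sigmoid_le_one (a + m * d), Real.sigmoid_nonneg (a + (0 : ℕ) * d)]
    _ = _ := mul_one _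

end LaplaceKernel

section IndependentSums

variable {X Y : Type*} [Fintype X]

lemma exists_sumIntegral_exp_neg_abs_le {p v : Y → X → ℝ} (hp : ∀ y x, 0 ≤ p y x) {y₀ : Y}
    {x₁ x₂ : X} (h₁ : 0 < p y₀ x₁) (h₂ : 0 < p y₀ x₂) (hv : v y₀ x₁ < v y₀ x₂) :
    ∃ B, 0 < B ∧ ∀ (N : ℕ) (y : Fin N → Y) (a : ℝ),
      sumIntegral (p ∘ y) (v ∘ y) (fun t => Real.exp (-|t|)) a ≤
        (∏ n, ∑ x, p (y n) x) *
          (B * (1 + (Finset.univ.filter fun n => y n = y₀).card) ^ (-(1 / 2) : ℝ)) := by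
  obtain ⟨q, hq₀, hq₁, hpair⟩ := exists_chargesPair (hp y₀) h₁ h₂ hv
  set d := v y₀ x₂ - v y₀ x₁
  have hd : 0 < d := sub_pos.2 hv
  have hD : 0 < 1 - Real.exp (-d) := sub_pos.2 (Real.exp_lt_one_iff.2 (neg_lt_zero.2 hd))
  refine ⟨4 / (1 - Real.exp (-d)) * (q / 2) ^ (-(1 / 2) : ℝ), by positivity, fun N y a => ?_⟩
  have hbound := sumIntegral_iterate_twoPointAverage_le hq₀.le hq₁ (by norm_num) (by norm_num)
    (by positivity) (iterate_twoPointAverage_le (fun t => (Real.exp_pos (-|t|)).le)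
      (sum_exp_neg_abs_add_mul_le hd)) (p ∘ y) (v ∘ y) (fun n => hp (y n)) 0 a
  refine hbound.trans (mul_le_mul_of_nonneg_left ?_
    (Finset.prod_nonneg fun n _ => Finset.sum_nonneg fun x _ => hp _ _))
  have hcount : ((Finset.univ.filter fun n => y n = y₀).card : ℝ) ≤
      (Finset.univ.filter fun n => ChargesPair ((p ∘ y) n) ((v ∘ y) n) d q).card := by
    refine Nat.cast_le.2 (Finset.card_le_card fun n hn => ?_)
    simpa [(Finset.mem_filter.1 hn).2] using hpair
  rw [mul_assoc, ← Real.mul_rpow (by positivity) (by positivity)]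
  refine mul_le_mul_of_nonneg_left (Real.rpow_le_rpow_of_nonpos (by positivity) ?_ (by norm_num))
    (by positivity)
  push_cast
  nlinarith

lemma sum_prod_mul_card_rpow_neg_le [Fintype Y] {f : Y → ℝ} (hf : ∀ y, 0 ≤ f y) {y₀ : Y}
    {q θ : ℝ} (hθ₀ : 0 ≤ θ) (hθ₁ : θ ≤ 1) (hq₀ : 0 ≤ q) (hq₁ : q ≤ 1)
    (hq : f y₀ = q * ∑ y, f y) (N : ℕ) {u : ℝ} (hu : 1 ≤ u) :
    ∑ y : Fin N → Y, (∏ n, f (y n)) * (u + (Finset.univ.filter fun n => y n = y₀).card) ^ (-θ) ≤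
      (∑ y, f y) ^ N * (u + q / 2 * N) ^ (-θ) := by
  let I (y : Y) : ℝ := if y = y₀ then 1 else 0
  have hF : 0 ≤ ∑ y, f y := Finset.sum_nonneg fun y _ => hf y
  suffices h : ∀ u : ℝ, 1 ≤ u → sumIntegral (fun _ : Fin N => f) (fun _ => I) (· ^ (-θ)) u ≤
      (∑ y, f y) ^ N * (u + q / 2 * N) ^ (-θ) by
    simpa only [sumIntegral, I, Finset.natCast_card_filter] using h u hu
  clear hu u
  induction N with
  | zero => simp [sumIntegral_zero]
  | succ N ih =>
    intro u hu
    let b (u : ℝ) : ℝ := (∑ y, f y) ^ N * (u + q / 2 * N) ^ (-θ)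
    have hterm (y : Y) : f y * sumIntegral (fun _ : Fin N => f) (fun _ => I) (· ^ (-θ)) (u + I y) ≤
        f y * b u + if y = y₀ then f y * (b (u + 1) - b u) else 0 := by
      by_cases hy : y = y₀
      · simp only [I, if_pos hy, ← mul_add, add_sub_cancel]
        exact mul_le_mul_of_nonneg_left (ih _ (by linarith)) (hf y)
      · simp only [I, if_neg hy, add_zero]
        exact mul_le_mul_of_nonneg_left (ih u hu) (hf y)
    have hmix := mul_rpow_neg_add_mul_rpow_neg_le hq₀ hq₁ (u := u + q / 2 * N)
      (hu.trans (le_add_of_nonneg_right (by positivity))) hθ₀ hθ₁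
    rw [sumIntegral_succ]
    calc _ ≤ ∑ y, (f y * b u + if y = y₀ then f y * (b (u + 1) - b u) else 0) :=
          Finset.sum_le_sum fun y _ => hterm y
      _ = (∑ y, f y) * (q * b (u + 1) + (1 - q) * b u) := by
          simp only [Finset.sum_add_distrib, ← Finset.sum_mul, Finset.sum_ite_eq',
            Finset.mem_univ, if_true, hq]
          ring
      _ = (∑ y, f y) ^ (N + 1) * (q * (u + q / 2 * N + 1) ^ (-θ) +
            (1 - q) * (u + q / 2 * N) ^ (-θ)) := by
          simp only [b, add_right_comm u 1]
          ring
      _ ≤ (∑ y, f y) ^ (N + 1) * (u + q / 2 * N + q / 2) ^ (-θ) :=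
          mul_le_mul_of_nonneg_left hmix (by positivity)
      _ = _ := by
          push_cast
          ring_nf

end IndependentSums

end Anticoncentration

section GallagerFunction

lemma hasDerivAt_rpow_one_div_one_add {w ρ : ℝ} (hw : 0 ≤ w) (hρ : -1 < ρ) :
    HasDerivAt (fun ρ => w ^ (1 / (1 + ρ)))
      (-(w ^ (1 / (1 + ρ)) * Real.log w / (1 + ρ) ^ 2)) ρ := by
  rcases hw.eq_or_lt with rfl | hw
  · have hconst : (fun ρ : ℝ => (0 : ℝ) ^ (1 / (1 + ρ))) =ᶠ[nhds ρ] fun _ => 0 := by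
      filter_upwards [lt_mem_nhds hρ] with t ht
      have : 0 < 1 + t := by linarith
      exact Real.zero_rpow (by positivity)
    simpa using (hasDerivAt_const ρ (0 : ℝ)).congr_of_eventuallyEq hconst
  · have hne : 1 + ρ ≠ 0 := by linarith
    have hinv : HasDerivAt (fun ρ : ℝ => 1 / (1 + ρ)) (-1 / (1 + ρ) ^ 2) ρ := by
      simpa using ((hasDerivAt_id ρ).const_add 1).fun_inv hne
    convert hinv.const_rpow hw using 1
    ring

lemma exists_mem_Ioo_isMaxOn {f : ℝ → ℝ} {a b f'a f'b : ℝ} (hab : a < b)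
    (hf : ContinuousOn f (Set.Icc a b)) (ha : HasDerivWithinAt f f'a (Set.Icc a b) a)
    (hb : HasDerivWithinAt f f'b (Set.Icc a b) b) (ha' : 0 < f'a) (hb' : f'b < 0) :
    ∃ c ∈ Set.Ioo a b, IsMaxOn f (Set.Icc a b) c := by
  obtain ⟨c, hc, hmax⟩ := isCompact_Icc.exists_isMaxOn (Set.nonempty_Icc.2 hab.le) hf
  refine ⟨c, ⟨hc.1.lt_of_ne ?_, hc.2.lt_of_ne ?_⟩, hmax⟩
  · rintro rfl
    have hcone : b - a ∈ posTangentConeAt (Set.Icc a b) a :=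
      sub_mem_posTangentConeAt_of_segment_subset (segment_eq_Icc hab.le).subset
    have := hmax.localize.hasFDerivWithinAt_nonpos ha hcone
    simp only [ContinuousLinearMap.toSpanSingleton_apply, smul_eq_mul] at this
    nlinarith
  · rintro rfl
    have hcone : a - c ∈ posTangentConeAt (Set.Icc a c) c :=
      sub_mem_posTangentConeAt_of_segment_subset
        (by rw [segment_symm, segment_eq_Icc hab.le])
    have := hmax.localize.hasFDerivWithinAt_nonpos hb hcone
    simp only [ContinuousLinearMap.toSpanSingleton_apply, smul_eq_mul] at this
    nlinarith

lemma deriv_eq_of_mem_Subderiv {f : ℝ → ℝ} {g R : ℝ} (hg : g ∈ Subderiv f R)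
    (hf : DifferentiableAt ℝ f R) : deriv f R = g := by
  have hmin : IsLocalMin (fun a => f a - g * a) R :=
    Filter.Eventually.of_forall fun a => by
      have := hg a
      simp only
      linarith
  have hderiv : HasDerivAt (fun a => f a - g * a) (deriv f R - g) R := by
    simpa using hf.hasDerivAt.fun_sub ((hasDerivAt_id R).const_mul g)
  exact sub_eq_zero.1 (hmin.hasDerivAt_eq_zero hderiv)

variable {X Y : Type*}

/-- The tilted input weight `Q(x) W(y|x)^{1/(1+ρ)}` given the output `y`. -/
noncomputable def tiltedWeight (W : X → Y → ℝ) (Q : X → ℝ) (ρ : ℝ) (y : Y) (x : X) : ℝ :=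
  Q x * W x y ^ (1 / (1 + ρ))

lemma tiltedWeight_nonneg {W : X → Y → ℝ} (hW : ∀ x y, 0 ≤ W x y) {Q : X → ℝ} (hQ : ∀ x, 0 ≤ Q x)
    (ρ : ℝ) (y : Y) (x : X) : 0 ≤ tiltedWeight W Q ρ y x :=
  mul_nonneg (hQ x) (Real.rpow_nonneg (hW x y) _)

lemma tiltedWeight_eq_zero_iff {W : X → Y → ℝ} (hW : ∀ x y, 0 ≤ W x y) {Q : X → ℝ} {ρ : ℝ}
    (hρ : -1 < ρ) {y : Y} {x : X} : tiltedWeight W Q ρ y x = 0 ↔ Q x * W x y = 0 := by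
  have : 1 / (1 + ρ) ≠ 0 := one_div_ne_zero (by linarith)
  rw [tiltedWeight, mul_eq_zero, mul_eq_zero, Real.rpow_eq_zero (hW x y) this]

variable [Fintype X]

/-- The inner sum `∑ x, Q(x) W(y|x)^{1/(1+ρ)}` of the Gallager function. -/
noncomputable def gallagerBase (W : X → Y → ℝ) (Q : X → ℝ) (ρ : ℝ) (y : Y) : ℝ :=
  ∑ x, tiltedWeight W Q ρ y x

section Nonneg

variable {W : X → Y → ℝ} (hW : ∀ x y, 0 ≤ W x y) {Q : X → ℝ} {ρ : ℝ}
include hW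

lemma hasDerivAt_gallagerBase_rpow_of_pos (hρ : -1 < ρ) {y : Y} (hy : 0 < gallagerBase W Q ρ y) :
    HasDerivAt (fun ρ => gallagerBase W Q ρ y ^ (1 + ρ))
      (-(gallagerBase W Q ρ y ^ ρ * ∑ x, tiltedWeight W Q ρ y x *
        (Real.log (W x y) / (1 + ρ) - Real.log (gallagerBase W Q ρ y)))) ρ := by
  have hne : 1 + ρ ≠ 0 := by linarith
  have hbase : HasDerivAt (fun ρ => gallagerBase W Q ρ y)
      (∑ x, Q x * -(W x y ^ (1 / (1 + ρ)) * Real.log (W x y) / (1 + ρ) ^ 2)) ρ :=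
    HasDerivAt.fun_sum fun x _ => (hasDerivAt_rpow_one_div_one_add (hW x y) hρ).const_mul (Q x)
  have hsum : (∑ x, Q x * -(W x y ^ (1 / (1 + ρ)) * Real.log (W x y) / (1 + ρ) ^ 2)) * (1 + ρ) =
      -∑ x, tiltedWeight W Q ρ y x * (Real.log (W x y) / (1 + ρ)) := by
    rw [Finset.sum_mul, ← Finset.sum_neg_distrib]
    refine Finset.sum_congr rfl fun x _ => ?_
    rw [tiltedWeight]
    field_simp
  refine (hbase.rpow ((hasDerivAt_id ρ).const_add 1) hy).congr_deriv ?_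
  simp only [id, one_mul, add_sub_cancel_left, hsum, mul_sub, Finset.sum_sub_distrib,
    ← Finset.sum_mul]
  rw [← gallagerBase, Real.rpow_add hy, Real.rpow_one]
  ring

variable (hQ : ∀ x, 0 ≤ Q x)
include hQ

lemma gallagerBase_nonneg (ρ : ℝ) (y : Y) : 0 ≤ gallagerBase W Q ρ y :=
  Finset.sum_nonneg fun x _ => tiltedWeight_nonneg hW hQ ρ y x

lemma gallagerBase_eq_zero_iff (hρ : -1 < ρ) {y : Y} :
    gallagerBase W Q ρ y = 0 ↔ ∀ x, Q x * W x y = 0 := by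
  rw [gallagerBase, Finset.sum_eq_zero_iff_of_nonneg fun x _ => tiltedWeight_nonneg hW hQ ρ y x]
  simp only [Finset.mem_univ, true_imp_iff, tiltedWeight_eq_zero_iff hW hρ]

lemma gallagerBase_pos (hρ : -1 < ρ) {x : X} {y : Y} (hx : Q x ≠ 0) (hxy : W x y ≠ 0) :
    0 < gallagerBase W Q ρ y :=
  (gallagerBase_nonneg hW hQ ρ y).lt_of_ne' fun h =>
    mul_ne_zero hx hxy ((gallagerBase_eq_zero_iff hW hQ hρ).1 h x)

lemma hasDerivAt_gallagerBase_rpow (hρ : -1 < ρ) (y : Y) :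
    HasDerivAt (fun ρ => gallagerBase W Q ρ y ^ (1 + ρ))
      (-(gallagerBase W Q ρ y ^ ρ * ∑ x, tiltedWeight W Q ρ y x *
        (Real.log (W x y) / (1 + ρ) - Real.log (gallagerBase W Q ρ y)))) ρ := by
  rcases (gallagerBase_nonneg hW hQ ρ y).eq_or_lt' with hzero | hpos
  · have hsupport := (gallagerBase_eq_zero_iff hW hQ hρ).1 hzero
    have hconst : (fun ρ => gallagerBase W Q ρ y ^ (1 + ρ)) =ᶠ[nhds ρ] fun _ => 0 := by
      filter_upwards [lt_mem_nhds hρ] with t ht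
      rw [(gallagerBase_eq_zero_iff hW hQ ht).2 hsupport, Real.zero_rpow (by linarith)]
    simpa [(tiltedWeight_eq_zero_iff hW hρ).2 (hsupport _)] using
      (hasDerivAt_const ρ (0 : ℝ)).congr_of_eventuallyEq hconst
  · exact hasDerivAt_gallagerBase_rpow_of_pos hW hρ hpos

end Nonneg

variable [Fintype Y] {W : X → Y → ℝ} (hW : IsChannel W) {Q : X → ℝ} (hQ : IsDist Q) {ρ : ℝ}
include hW hQ

lemma sum_gallagerBase_rpow_pos (hρ : -1 < ρ) : 0 < ∑ y, gallagerBase W Q ρ y ^ (1 + ρ) := by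
  obtain ⟨x, -, hx⟩ := Finset.exists_ne_zero_of_sum_ne_zero (hQ.2.trans_ne one_ne_zero)
  obtain ⟨y, -, hxy⟩ := Finset.exists_ne_zero_of_sum_ne_zero ((hW.2 x).trans_ne one_ne_zero)
  exact Finset.sum_pos' (fun y _ => Real.rpow_nonneg (gallagerBase_nonneg hW.1 hQ.1 ρ y) _)
    ⟨y, Finset.mem_univ y, Real.rpow_pos_of_pos (gallagerBase_pos hW.1 hQ.1 hρ hx hxy) _⟩

lemma hasDerivAt_Eo (hρ : -1 < ρ) :
    HasDerivAt (fun ρ => Eo W ρ Q)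
      ((∑ y, gallagerBase W Q ρ y ^ ρ * ∑ x, tiltedWeight W Q ρ y x *
          (Real.log (W x y) / (1 + ρ) - Real.log (gallagerBase W Q ρ y))) /
        ∑ y, gallagerBase W Q ρ y ^ (1 + ρ)) ρ := by
  have hsum : HasDerivAt (fun ρ => ∑ y, gallagerBase W Q ρ y ^ (1 + ρ)) _ ρ :=
    HasDerivAt.fun_sum fun y _ => hasDerivAt_gallagerBase_rpow hW.1 hQ.1 hρ y
  refine (hsum.log (sum_gallagerBase_rpow_pos hW hQ hρ).ne').fun_neg.congr_deriv ?_
  rw [Finset.sum_neg_distrib, neg_div, neg_neg]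

lemma hasDerivAt_Eo_zero : HasDerivAt (fun ρ => Eo W ρ Q) (MI W Q) 0 := by
  convert hasDerivAt_Eo hW hQ (ρ := 0) (by norm_num) using 1
  have hbase (y : Y) : gallagerBase W Q 0 y = ∑ x, Q x * W x y := by
    simp [gallagerBase, tiltedWeight]
  have hnorm : ∑ y, gallagerBase W Q 0 y ^ (1 + (0 : ℝ)) = 1 := by
    simp only [add_zero, Real.rpow_one, hbase]
    rw [Finset.sum_comm]
    simp [← Finset.mul_sum, hW.2, hQ.2]
  rw [hnorm, div_one, MI, Finset.sum_comm]
  refine Finset.sum_congr rfl fun y _ => ?_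
  rw [Real.rpow_zero, one_mul]
  refine Finset.sum_congr rfl fun x _ => ?_
  by_cases hzero : Q x * W x y = 0
  · rw [hzero, zero_mul, (tiltedWeight_eq_zero_iff hW.1 (by norm_num)).2 hzero, zero_mul]
  · have hpos := gallagerBase_pos hW.1 hQ.1 (ρ := 0) (by norm_num) (left_ne_zero_of_mul hzero)
      (right_ne_zero_of_mul hzero)
    rw [← hbase y, Real.log_div (right_ne_zero_of_mul hzero) hpos.ne']
    simp [tiltedWeight]

lemma continuousOn_neg_mul_add_Eo (R : ℝ) :
    ContinuousOn (fun ρ => -ρ * R + Eo W ρ Q) (Set.Icc 0 1) :=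
  fun ρ hρ => ContinuousAt.continuousWithinAt <|
    (continuousAt_id.neg.mul_const R).add
      (hasDerivAt_Eo hW hQ (by linarith [hρ.1])).continuousAt

lemma le_ErQ (R : ℝ) (hρ : ρ ∈ Set.Icc 0 1) : -ρ * R + Eo W ρ Q ≤ ErQ W R Q :=
  le_csSup (isCompact_Icc.image_of_continuousOn (continuousOn_neg_mul_add_Eo hW hQ R)).bddAbove
    ⟨ρ, hρ, rfl⟩

lemma exists_mem_Ioo_ErQ_eq {R : ℝ} (hR₁ : RcrQ W Q < R) (hR₂ : R < MI W Q) :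
    ∃ ρ ∈ Set.Ioo 0 1, ErQ W R Q = -ρ * R + Eo W ρ Q := by
  have hderiv {ρ D : ℝ} (h : HasDerivAt (fun ρ => Eo W ρ Q) D ρ) :
      HasDerivAt (fun ρ => -ρ * R + Eo W ρ Q) (-R + D) ρ := by
    simpa using ((hasDerivAt_id ρ).fun_neg.mul_const R).fun_add h
  have hone : HasDerivAt (fun ρ => Eo W ρ Q) (RcrQ W Q) 1 :=
    (hasDerivAt_Eo hW hQ (by norm_num)).differentiableAt.hasDerivAt
  obtain ⟨ρ, hρ, hmax⟩ := exists_mem_Ioo_isMaxOn zero_lt_one (continuousOn_neg_mul_add_Eo hW hQ R)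
    (hderiv (hasDerivAt_Eo_zero hW hQ)).hasDerivWithinAt (hderiv hone).hasDerivWithinAt
    (by linarith) (by linarith)
  refine ⟨ρ, hρ, IsGreatest.csSup_eq ⟨⟨ρ, Set.Ioo_subset_Icc_self hρ, rfl⟩, ?_⟩⟩
  rintro _ ⟨t, ht, rfl⟩
  exact hmax ht

/-- Where `ErQ` is not differentiable, `rhoStarQ` takes the junk value `0 ≤ ρ`. -/
lemma rhoStarQ_le_of_ErQ_eq {R : ℝ} (hρ : ρ ∈ Set.Icc 0 1)
    (hER : ErQ W R Q = -ρ * R + Eo W ρ Q) : rhoStarQ W Q R ≤ ρ := by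
  have hsub : -ρ ∈ Subderiv (fun a => ErQ W a Q) R := fun a => by
    simp only [hER]
    linarith [le_ErQ hW hQ a hρ]
  rw [rhoStarQ]
  by_cases hdiff : DifferentiableAt ℝ (fun a => ErQ W a Q) R
  · rw [deriv_eq_of_mem_Subderiv hsub hdiff, neg_neg]
  · rw [deriv_zero_of_not_differentiableAt hdiff, neg_zero]
    exact hρ.1

end GallagerFunction

section UnionBound

lemma min_one_le_rpow_mul_exp {ρ κ t : ℝ} (ht : 0 < t) (h₁ : κ ≤ ρ) (h₂ : κ ≤ 1 - ρ) :
    min 1 t ≤ t ^ ρ * Real.exp (-(κ * |Real.log t|)) := by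
  rw [Real.rpow_def_of_pos ht, ← Real.exp_add]
  rcases le_total 1 t with hle | hle
  · refine (min_le_left _ _).trans (Real.one_le_exp ?_)
    rw [abs_of_nonneg (Real.log_nonneg hle)]
    nlinarith [Real.log_nonneg hle]
  · refine (min_le_right _ _).trans ((Real.exp_log ht).symm.trans_le (Real.exp_le_exp.2 ?_))
    rw [abs_of_nonpos (Real.log_nonpos ht.le hle)]
    nlinarith [Real.log_nonpos ht.le hle]

variable {A : Type*} [Fintype A] {P w : A → ℝ} (hP : ∀ a, 0 ≤ P a) (hw : ∀ a, 0 ≤ w a)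
include hP hw

/-- Each `a` with `t ≤ w a` carries weight
`w a ^ s * exp (-|s * log (w a / t)|) = w a ^ s * (w a / t) ^ (-s) = t ^ s`. -/
lemma upperTail_le {s D t : ℝ} (hs : 0 ≤ s) (ht : 0 < t)
    (hD : ∀ r, ∑ a, P a * w a ^ s * Real.exp (-|r + s * Real.log (w a)|) ≤ D) :
    upperTail P w t ≤ D * t ^ (-s) := by
  refine le_trans ?_ (mul_le_mul_of_nonneg_right (hD (-(s * Real.log t))) (by positivity))
  rw [upperTail, Finset.sum_mul]
  refine Finset.sum_le_sum fun a _ => ?_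
  split_ifs with hta
  · have hlog := mul_le_mul_of_nonneg_left (Real.log_le_log ht hta) hs
    rw [abs_of_nonneg (by linarith), mul_assoc, mul_assoc, Real.rpow_def_of_pos (ht.trans_le hta),
      Real.rpow_def_of_pos ht, ← Real.exp_add, ← Real.exp_add]
    refine le_of_eq ?_
    ring_nf
    rw [Real.exp_zero, mul_one]
  · have := hP a
    have := hw a
    positivity

lemma min_one_mul_upperTail_le {ρ κ s M D t : ℝ} (hκ : 0 ≤ κ) (h₁ : κ ≤ ρ) (h₂ : κ ≤ 1 - ρ)
    (hs : 0 ≤ s) (hM : 0 < M) (hD₀ : 0 < D) (ht : 0 < t)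
    (hD : ∀ r, ∑ a, P a * w a ^ s * Real.exp (-|r + s * Real.log (w a)|) ≤ D) :
    min 1 (M * upperTail P w t) ≤ (M * D) ^ ρ * (t ^ (-s)) ^ ρ *
      Real.exp (-|-(κ * Real.log (M * D)) + κ * s * Real.log t|) := by
  have hMD : 0 < M * D := mul_pos hM hD₀
  have htail : M * upperTail P w t ≤ M * D * t ^ (-s) := by
    rw [mul_assoc]
    exact mul_le_mul_of_nonneg_left (upperTail_le hP hw hs ht hD) hM.le
  have hlog : κ * |Real.log (M * D * t ^ (-s))| =
      |-(κ * Real.log (M * D)) + κ * s * Real.log t| := by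
    rw [Real.log_mul hMD.ne' (by positivity), Real.log_rpow ht, ← abs_of_nonneg hκ, ← abs_mul,
      abs_of_nonneg hκ, ← abs_neg]
    ring_nf
  refine (min_le_min_left 1 htail).trans
    ((min_one_le_rpow_mul_exp (by positivity) h₁ h₂).trans_eq ?_)
  rw [hlog, Real.mul_rpow hMD.le (by positivity)]

lemma rcu_le {ρ κ M D E : ℝ} (hκ : 0 ≤ κ) (h₁ : κ ≤ ρ) (h₂ : κ ≤ 1 - ρ) (hM : 0 < M)
    (hD : ∀ r, ∑ a, P a * w a ^ (1 / (1 + ρ)) *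
      Real.exp (-|r + 1 / (1 + ρ) * Real.log (w a)|) ≤ D)
    (hE : ∀ r, ∑ a, P a * w a ^ (1 / (1 + ρ)) *
      Real.exp (-|r + κ * (1 / (1 + ρ)) * Real.log (w a)|) ≤ E) :
    rcu P w M ≤ (M * D) ^ ρ * E := by
  have hρ : 0 < 1 + ρ := by linarith
  set s := 1 / (1 + ρ) with hs
  have hs₀ : 0 < s := by positivity
  have hterm (a : A) (r : ℝ) : 0 ≤ P a * w a ^ s * Real.exp (-|r|) :=
    mul_nonneg (mul_nonneg (hP a) (Real.rpow_nonneg (hw a) s)) (Real.exp_pos _).le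
  have hD₀ : 0 ≤ D := (Finset.sum_nonneg fun a _ => hterm a _).trans (hD 0)
  have hMD₀ : 0 ≤ (M * D) ^ ρ := by positivity
  refine le_trans ?_ (mul_le_mul_of_nonneg_left (hE (-(κ * Real.log (M * D)))) hMD₀)
  rw [rcu, Finset.mul_sum]
  refine Finset.sum_le_sum fun a _ => ?_
  by_cases ha : P a * w a = 0
  · rw [ha, zero_mul]
    exact mul_nonneg hMD₀ (hterm a _)
  have hPa : 0 < P a := (hP a).lt_of_ne' (left_ne_zero_of_mul ha)
  have hwa : 0 < w a := (hw a).lt_of_ne' (right_ne_zero_of_mul ha)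
  have hDpos : 0 < D := (hD 0).trans_lt' <|
    Finset.sum_pos' (fun a _ => hterm a _) ⟨a, Finset.mem_univ a, by positivity⟩
  have htilt : w a * (w a ^ (-s)) ^ ρ = w a ^ s := by
    have hexponent : 1 + -s * ρ = s := by
      rw [hs]
      field_simp
      ring
    rw [← Real.rpow_mul hwa.le, ← Real.rpow_one_add' hwa.le (hexponent.trans_ne hs₀.ne'), hexponent]
  refine (mul_le_mul_of_nonneg_left (min_one_mul_upperTail_le hP hw hκ h₁ h₂ hs₀.le hM hDpos hwa hD)
    (by positivity)).trans_eq ?_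
  rw [← htilt]
  ring

end UnionBound

section MemorylessChannel

variable {X Y : Type*} {W : X → Y → ℝ}

lemma Wn_nonneg (hW : ∀ x y, 0 ≤ W x y) {N : ℕ} (x : Fin N → X) (y : Fin N → Y) :
    0 ≤ Wn W x y :=
  Finset.prod_nonneg fun _ _ => hW _ _

lemma exists_lt_of_not_singular (hW : ∀ x y, 0 ≤ W x y) {Q : X → ℝ} (hQ : ∀ x, 0 ≤ Q x)
    (h : ¬ Singular W Q) :
    ∃ y x z, 0 < Q x ∧ 0 < W x y ∧ 0 < Q z ∧ 0 < W z y ∧ W x y < W z y := by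
  simp only [Singular, not_forall] at h
  obtain ⟨x, y, z, hpos, hne⟩ := h
  have hx := left_ne_zero_of_mul hpos.ne'
  have hz := right_ne_zero_of_mul hpos.ne'
  have hQx := (hQ x).lt_of_ne' (left_ne_zero_of_mul hx)
  have hWx := (hW x y).lt_of_ne' (right_ne_zero_of_mul hx)
  have hQz := (hQ z).lt_of_ne' (left_ne_zero_of_mul hz)
  have hWz := (hW z y).lt_of_ne' (right_ne_zero_of_mul hz)
  rcases lt_or_gt_of_ne hne with hlt | hlt
  · exact ⟨y, x, z, hQx, hWx, hQz, hWz, hlt⟩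
  · exact ⟨y, z, x, hQz, hWz, hQx, hWx, hlt⟩

lemma sum_mul_Wn_rpow_mul_eq_sumIntegral [Fintype X] (hW : ∀ x y, 0 ≤ W x y) (Q : X → ℝ) {ρ : ℝ}
    (hρ : -1 < ρ) (F : ℝ → ℝ) (a c : ℝ) {N : ℕ} (y : Fin N → Y) :
    ∑ x : Fin N → X, (∏ n, Q (x n)) * Wn W x y ^ (1 / (1 + ρ)) *
        F (a + c * Real.log (Wn W x y)) =
      sumIntegral (tiltedWeight W Q ρ ∘ y) ((fun y x => c * Real.log (W x y)) ∘ y) F a := by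
  refine Finset.sum_congr rfl fun x _ => ?_
  have hweight : (∏ n, Q (x n)) * Wn W x y ^ (1 / (1 + ρ)) =
      ∏ n, tiltedWeight W Q ρ (y n) (x n) := by
    simp only [tiltedWeight, Finset.prod_mul_distrib, Wn]
    rw [Real.finsetProd_rpow _ _ fun n _ => hW _ _]
  by_cases hzero : Wn W x y = 0
  · simp only [Function.comp_apply, ← hweight, hzero,
      Real.zero_rpow (one_div_ne_zero (by linarith : 1 + ρ ≠ 0)), mul_zero, zero_mul]
  · simp only [Function.comp_apply, hweight, ← Finset.mul_sum]
    rw [Wn, Real.log_prod fun n hn => Finset.prod_ne_zero_iff.1 hzero n hn]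

lemma exists_rcu_Wn_le [Fintype X] (hW : ∀ x y, 0 ≤ W x y) {Q : X → ℝ} (hQ : ∀ x, 0 ≤ Q x)
    (h : ¬ Singular W Q) {ρ : ℝ} (hρ : ρ ∈ Set.Ioo 0 1) :
    ∃ y₀ K, 0 < gallagerBase W Q ρ y₀ ∧ 0 < K ∧ ∀ (N : ℕ) (y : Fin N → Y) (M : ℝ), 0 < M →
      rcu (fun x : Fin N → X => ∏ n, Q (x n)) (Wn W · y) M ≤
        K * M ^ ρ * ((∏ n, gallagerBase W Q ρ (y n) ^ (1 + ρ)) *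
          (1 + (Finset.univ.filter fun n => y n = y₀).card) ^ (-((1 + ρ) / 2))) := by
  obtain ⟨hρ₀, hρ₁⟩ := hρ
  have hρ : -1 < ρ := by linarith
  obtain ⟨y₀, x₁, x₂, hQ₁, hW₁, hQ₂, hW₂, hlt⟩ := exists_lt_of_not_singular hW hQ h
  have hanti {c : ℝ} (hc : 0 < c) := exists_sumIntegral_exp_neg_abs_le
    (v := fun y x => c * Real.log (W x y)) (tiltedWeight_nonneg hW hQ ρ)
    (mul_pos hQ₁ (Real.rpow_pos_of_pos hW₁ _)) (mul_pos hQ₂ (Real.rpow_pos_of_pos hW₂ _))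
    (mul_lt_mul_of_pos_left (Real.log_lt_log hW₁ hlt) hc)
  have hκ : 0 < min ρ (1 - ρ) := lt_min hρ₀ (by linarith)
  obtain ⟨B₁, hB₁, h₁⟩ := hanti (c := 1 / (1 + ρ)) (by positivity)
  obtain ⟨B₂, hB₂, h₂⟩ := hanti (c := min ρ (1 - ρ) * (1 / (1 + ρ))) (by positivity)
  refine ⟨y₀, B₁ ^ ρ * B₂, gallagerBase_pos hW hQ hρ hQ₁.ne' hW₁.ne', by positivity,
    fun N y M hM => ?_⟩
  set L : ℝ := 1 + (Finset.univ.filter fun n => y n = y₀).card with hL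
  have hL₀ : 0 < L := by positivity
  set G := ∏ n, gallagerBase W Q ρ (y n) with hG
  have hG₀ : 0 ≤ G := Finset.prod_nonneg fun n _ => gallagerBase_nonneg hW hQ ρ (y n)
  have hGpow : ∏ n, gallagerBase W Q ρ (y n) ^ (1 + ρ) = G * G ^ ρ := by
    rw [Real.finsetProd_rpow _ _ fun n _ => gallagerBase_nonneg hW hQ ρ _, ← hG,
      Real.rpow_one_add' hG₀ (by linarith)]
  have hLpow : L ^ (-((1 + ρ) / 2)) = (L ^ (-(1 / 2) : ℝ)) ^ ρ * L ^ (-(1 / 2) : ℝ) := by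
    rw [← Real.rpow_mul hL₀.le, ← Real.rpow_add hL₀]
    ring_nf
  have hrcu := rcu_le (fun x => Finset.prod_nonneg fun n _ => hQ (x n)) (Wn_nonneg hW · y) hκ.le
    (min_le_left _ _) (min_le_right _ _) hM
    (fun r => (sum_mul_Wn_rpow_mul_eq_sumIntegral hW Q hρ _ r _ y).trans_le (h₁ N y r))
    (fun r => (sum_mul_Wn_rpow_mul_eq_sumIntegral hW Q hρ _ r _ y).trans_le (h₂ N y r))
  refine hrcu.trans_eq ?_
  simp only [← gallagerBase.eq_1, ← hG, ← hL]
  rw [hGpow, hLpow, Real.mul_rpow hM.le (by positivity), Real.mul_rpow hG₀ (by positivity),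
    Real.mul_rpow hB₁.le (by positivity)]
  ring

variable [Fintype X] [Fintype Y]

lemma exp_neg_Eo_eq (hW : IsChannel W) {Q : X → ℝ} (hQ : IsDist Q) {ρ : ℝ} (hρ : -1 < ρ) :
    Real.exp (-Eo W ρ Q) = ∑ y, gallagerBase W Q ρ y ^ (1 + ρ) := by
  rw [Eo, neg_neg]
  exact Real.exp_log (sum_gallagerBase_rpow_pos hW hQ hρ)

lemma exists_sum_rcu_Wn_le (hW : IsChannel W) {Q : X → ℝ} (hQ : IsDist Q) (h : ¬ Singular W Q)
    {ρ : ℝ} (hρ : ρ ∈ Set.Ioo 0 1) :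
    ∃ K, 0 < K ∧ ∀ (N : ℕ) (M : ℝ), 0 < N → 0 < M →
      ∑ y : Fin N → Y, rcu (fun x : Fin N → X => ∏ n, Q (x n)) (Wn W · y) M ≤
        K * M ^ ρ * (N : ℝ) ^ (-((1 + ρ) / 2)) * Real.exp (-N * Eo W ρ Q) := by
  obtain ⟨y₀, K, hy₀, hK, hrcu⟩ := exists_rcu_Wn_le hW.1 hQ.1 h hρ
  obtain ⟨hρ₀, hρ₁⟩ := hρ
  have hρ : -1 < ρ := by linarith
  have hf₀ (y : Y) : 0 ≤ gallagerBase W Q ρ y ^ (1 + ρ) :=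
    Real.rpow_nonneg (gallagerBase_nonneg hW.1 hQ.1 ρ y) _
  have hsum := sum_gallagerBase_rpow_pos hW hQ hρ
  set q := gallagerBase W Q ρ y₀ ^ (1 + ρ) / ∑ y, gallagerBase W Q ρ y ^ (1 + ρ)
  have hq₀ : 0 < q := by positivity
  have hq₁ : q ≤ 1 :=
    (div_le_one hsum).2 (Finset.single_le_sum (fun y _ => hf₀ y) (Finset.mem_univ y₀))
  refine ⟨K * (q / 2) ^ (-((1 + ρ) / 2)), by positivity, fun N M hN hM => ?_⟩
  have hN₀ : (0 : ℝ) < N := Nat.cast_pos.2 hN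
  have hpow : (1 + q / 2 * N : ℝ) ^ (-((1 + ρ) / 2)) ≤
      (q / 2) ^ (-((1 + ρ) / 2)) * (N : ℝ) ^ (-((1 + ρ) / 2)) := by
    rw [← Real.mul_rpow (by positivity) hN₀.le]
    exact Real.rpow_le_rpow_of_nonpos (by positivity) (by linarith) (by linarith)
  have hcount := sum_prod_mul_card_rpow_neg_le hf₀ (y₀ := y₀) (θ := (1 + ρ) / 2) (by linarith)
    (by linarith) hq₀.le hq₁ (div_mul_cancel₀ _ hsum.ne').symm N le_rfl
  rw [neg_mul, mul_comm (N : ℝ), ← neg_mul, Real.exp_mul, Real.rpow_natCast, exp_neg_Eo_eq hW hQ hρ]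
  calc _ ≤ ∑ y : Fin N → Y, K * M ^ ρ * ((∏ n, gallagerBase W Q ρ (y n) ^ (1 + ρ)) *
        (1 + (Finset.univ.filter fun n => y n = y₀).card) ^ (-((1 + ρ) / 2))) :=
        Finset.sum_le_sum fun y _ => hrcu N y M hM
    _ ≤ K * M ^ ρ * ((∑ y, gallagerBase W Q ρ y ^ (1 + ρ)) ^ N *
        ((q / 2) ^ (-((1 + ρ) / 2)) * (N : ℝ) ^ (-((1 + ρ) / 2)))) := by
        rw [← Finset.mul_sum]
        gcongr
        exact hcount.trans (by gcongr)
    _ = _ := by ring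

lemma two_mul_nMsgs_le (N : ℕ) {R : ℝ} (hR : 0 ≤ R) :
    2 * (nMsgs N R : ℝ) ≤ 4 * Real.exp (N * R) := by
  have hceil : (nMsgs N R : ℝ) < Real.exp (N * R) + 1 := Nat.ceil_lt_add_one (Real.exp_pos _).le
  linarith [Real.one_le_exp (mul_nonneg N.cast_nonneg hR)]

lemma exists_code_Pmax_le (hW : IsChannel W) {Q : X → ℝ} (hQ : IsDist Q) (h : ¬ Singular W Q)
    {ρ : ℝ} (hρ : ρ ∈ Set.Ioo 0 1) {R : ℝ} (hR : 0 ≤ R) :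
    ∃ K, 0 < K ∧ ∀ N : ℕ, 0 < N →
      ∃ (f : Fin (nMsgs N R) → Fin N → X) (φ : (Fin N → Y) → Fin (nMsgs N R)),
        Pmax W f φ ≤
          K * (N : ℝ) ^ (-(1 + ρ) / 2) * Real.exp (-N * (-ρ * R + Eo W ρ Q)) := by
  obtain ⟨K, hK, hrcu⟩ := exists_sum_rcu_Wn_le hW hQ h hρ
  refine ⟨2 * (K * 4 ^ ρ), by positivity, fun N hN => ?_⟩
  have hM : 0 < nMsgs N R := Nat.ceil_pos.2 (Real.exp_pos _)
  have hrate : (2 * nMsgs N R : ℝ) ^ ρ ≤ 4 ^ ρ * Real.exp (N * (ρ * R)) := by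
    calc (2 * nMsgs N R : ℝ) ^ ρ ≤ (4 * Real.exp (N * R)) ^ ρ :=
          Real.rpow_le_rpow (by positivity) (two_mul_nMsgs_le N hR) hρ.1.le
      _ = 4 ^ ρ * Real.exp (N * (ρ * R)) := by
          rw [Real.mul_rpow (by norm_num) (Real.exp_pos _).le, ← Real.exp_mul]
          ring_nf
  have hsum : ∑ y : Fin N → Y, rcu (fun x : Fin N → X => ∏ n, Q (x n)) (Wn W · y)
      (2 * nMsgs N R) ≤
        K * 4 ^ ρ * (N : ℝ) ^ (-(1 + ρ) / 2) * Real.exp (-N * (-ρ * R + Eo W ρ Q)) := by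
    calc _ ≤ _ := hrcu N (2 * nMsgs N R) hN (by positivity)
      _ ≤ K * (4 ^ ρ * Real.exp (N * (ρ * R))) * (N : ℝ) ^ (-((1 + ρ) / 2)) *
          Real.exp (-N * Eo W ρ Q) := by gcongr
      _ = _ := by
          rw [neg_div, show -(N : ℝ) * (-ρ * R + Eo W ρ Q) = N * (ρ * R) + -N * Eo W ρ Q by ring,
            Real.exp_add]
          ring
  obtain ⟨f, φ, hf⟩ := exists_code_of_sum_rcu_le hQ.pi (fun x y => Wn_nonneg hW.1 x y) hM
    (by positivity) hsum
  have : Nonempty (Fin (nMsgs N R)) := ⟨⟨0, hM⟩⟩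
  refine ⟨f, φ, ciSup_le fun m => ?_⟩
  simpa only [mul_assoc] using hf m

end MemorylessChannel

theorem statement3_general {X Y : Type*} [Fintype X] [Fintype Y]
    (W : X → Y → ℝ) (hW : IsChannel W) (Q : X → ℝ) (hQ : IsDist Q) (R : ℝ) (hR : 0 ≤ R)
    (hns : ¬ Singular W Q) (hR1 : RcrQ W Q < R) (hR2 : R < MI W Q) :
    ∃ K : ℝ, 0 < K ∧ ∀ N : ℕ, 0 < N →
      ∃ (f : Fin (nMsgs N R) → Fin N → X) (φ : (Fin N → Y) → Fin (nMsgs N R)),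
        Pmax W f φ ≤
          K * (N : ℝ) ^ (-(1 + rhoStarQ W Q R) / 2) * Real.exp (-(N : ℝ) * ErQ W R Q) := by
  obtain ⟨ρ, hρ, hER⟩ := exists_mem_Ioo_ErQ_eq hW hQ hR1 hR2
  have hstar : rhoStarQ W Q R ≤ ρ := rhoStarQ_le_of_ErQ_eq hW hQ (Set.Ioo_subset_Icc_self hρ) hER
  obtain ⟨K, hK, hcode⟩ := exists_code_Pmax_le hW hQ hns hρ hR
  refine ⟨K, hK, fun N hN => ?_⟩
  obtain ⟨f, φ, hf⟩ := hcode N hN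
  have hN₁ : (1 : ℝ) ≤ N := Nat.one_le_cast.2 hN
  refine ⟨f, φ, hf.trans ?_⟩
  rw [hER]
  gcongr

/-- Refined random coding bound, nonsingular case: existence of an `(N,R)` code
with maximal error probability at most `K̃₂ · N^{-(1+ρ*_R(Q))/2} · exp(-N E_r(R,Q))`. -/
theorem statement3 {X Y : Type*} [Fintype X] [Fintype Y] [Nonempty X] [Nonempty Y]
    (W : X → Y → ℝ) (hW : IsChannel W) (hcr : Rcr W < Capacity W)
    (Q : X → ℝ) (hQ : IsDist Q) (R : ℝ) (hR : 0 < R)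
    (hns : ¬ Singular W Q) (hR1 : RcrQ W Q < R) (hR2 : R < MI W Q) :
    ∃ K : ℝ, 0 < K ∧ ∀ N : ℕ, 0 < N →
      ∃ (f : Fin (nMsgs N R) → Fin N → X) (φ : (Fin N → Y) → Fin (nMsgs N R)),
        Pmax W f φ ≤
          K * (N : ℝ) ^ (-(1 + rhoStarQ W Q R) / 2) * Real.exp (-(N : ℝ) * ErQ W R Q) :=
  statement3_general W hW Q hQ R hR.le hns hR1 hR2

end RCB
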